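/- For every e ∈ S^d and every a ∈ (0,π/2): Ũ_e(B(e,a)) = σ_d(B(e,2a)), and 2·ω_d·(2/π)^{2(d−1)}·a^d ≤ σ_d(B(e,2a)) ≤ 2^d·ω_{d+1}·a^d. -/

import Mathlib

open Real MeasureTheory Filter
open scoped RealInnerProductSpace ENNReal NNReal Topology

noncomputable section

/-- The ambient Euclidean space `ℝ^{d+1}`. -/
abbrev Esp (d : ℕ) : Type := EuclideanSpace ℝ (Fin (d + 1))

/-- The unit sphere `S^d ⊂ ℝ^{d+1}`. -/
def uSphere (d : ℕ) : Set (Esp d) := Metric.sphere 0 1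

/-- The spherical Lebesgue measure `σ_d` (d-dimensional Hausdorff measure restricted
to the unit sphere). -/
def sigmaMeas (d : ℕ) : Measure (Esp d) := (μH[(d : ℝ)]).restrict (uSphere d)

/-- `ω_{d+1} = σ_d(S^d)`, the total surface area of the unit sphere in `ℝ^{d+1}`. -/
def omegaTot (d : ℕ) : ℝ := (sigmaMeas d (uSphere d)).toReal

/-- `ω_d`, the `(d-1)`-dimensional measure of the unit sphere `S^{d-1} ⊂ ℝ^d`. -/
def omegaSm (d : ℕ) : ℝ :=
  (μH[((d : ℝ) - 1)] (Metric.sphere (0 : EuclideanSpace ℝ (Fin d)) 1)).toReal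

/-- `κ_d`, the volume of the unit ball in `ℝ^d`. -/
def kappaVol (d : ℕ) : ℝ :=
  (volume (Metric.ball (0 : EuclideanSpace ℝ (Fin d)) 1)).toReal

/-- The geodesic (angular) distance `d_s(x,y) = arccos ⟨x,y⟩` on the unit sphere. -/
def geo {d : ℕ} (x y : Esp d) : ℝ := Real.arccos ⟪x, y⟫

/-- The spherical ball (cap) `B(e,α)` of radius `α` centred at `e`. -/
def cap {d : ℕ} (e : Esp d) (α : ℝ) : Set (Esp d) := {x ∈ uSphere d | geo x e ≤ α}

/-- `K ∈ 𝒦̄_s^d`: a spherically convex body, i.e. the intersection of the unit sphere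
with a closed convex cone `C ≠ {0}` which is not a linear subspace. -/
def IsSphConvBody (d : ℕ) (K : Set (Esp d)) : Prop :=
  ∃ C : Set (Esp d), IsClosed C ∧ Convex ℝ C ∧
    (∀ x ∈ C, ∀ t : ℝ, 0 ≤ t → t • x ∈ C) ∧
    C ≠ {0} ∧ (∀ L : Submodule ℝ (Esp d), C ≠ (L : Set (Esp d))) ∧
    K = C ∩ uSphere d

/-- `K ∈ 𝒦_s^d`: a proper spherically convex body, i.e. the intersection of the unit
sphere with a line-free closed convex cone `C ≠ {0}`. -/
def IsProperSphConvBody (d : ℕ) (K : Set (Esp d)) : Prop :=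
  ∃ C : Set (Esp d), IsClosed C ∧ Convex ℝ C ∧
    (∀ x ∈ C, ∀ t : ℝ, 0 ≤ t → t • x ∈ C) ∧
    C ≠ {0} ∧ (∀ x ∈ C, x ≠ 0 → -x ∉ C) ∧
    K = C ∩ uSphere d

/-- The spherical mean width functional
`U₁(K) = (1/(2 ω_{d+1})) σ_d({x ∈ S^d : x^⊥ ∩ K ≠ ∅})`. -/
def U1 (d : ℕ) (K : Set (Esp d)) : ℝ :=
  (1 / (2 * omegaTot d)) * (sigmaMeas d {x | ∃ y ∈ K, ⟪x, y⟫ = 0}).toReal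

/-- `D(x) = ∫₀^x sin^{d-1} t dt`. -/
def Dfun (d : ℕ) (x : ℝ) : ℝ := ∫ t in (0:ℝ)..x, Real.sin t ^ (d - 1)

/-- `S_e = S^d ∩ e^⊥`, the great subsphere orthogonal to `e`. -/
def equator {d : ℕ} (e : Esp d) : Set (Esp d) := uSphere d ∩ {x | ⟪x, e⟫ = 0}

/-- The rotation invariant probability measure `σ⁰_{d-1}` on the great subsphere `S_e`. -/
def sigma0 (d : ℕ) (e : Esp d) : Measure (Esp d) :=
  (μH[((d : ℝ) - 1)] (equator e))⁻¹ • (μH[((d : ℝ) - 1)]).restrict (equator e)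

/-- The spherical radial function `α_{K,e}(u)`: the geodesic distance from `e` to the
boundary of `K` along the great circle through `e` in direction `u ∈ S_e`. -/
def sphRadial {d : ℕ} (K : Set (Esp d)) (e u : Esp d) : ℝ :=
  sSup {t : ℝ | 0 ≤ t ∧ t ≤ π / 2 ∧ (Real.cos t) • e + (Real.sin t) • u ∈ K}

/-- The set `-int(K*)`: points `e` of the sphere such that `K` is contained in the
open hemisphere centred at `e`. -/
def negIntPolar (d : ℕ) (K : Set (Esp d)) : Set (Esp d) :=
  {e ∈ uSphere d | ∀ x ∈ K, 0 < ⟪e, x⟫}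

/-- Points `e` of the sphere such that `K ⊆ {x : ⟨x,e⟩ ≥ 0}` (closed hemisphere). -/
def hemiCenters (d : ℕ) (K : Set (Esp d)) : Set (Esp d) :=
  {e ∈ uSphere d | ∀ x ∈ K, 0 ≤ ⟪x, e⟫}

/-- The `σ⁰_{d-1}`-average of `D ∘ α_{K,e}` over `S_e`. -/
def avgD (d : ℕ) (K : Set (Esp d)) (e : Esp d) : ℝ :=
  ∫ u, Dfun d (sphRadial K e u) ∂(sigma0 d e)

/-- The `L²(S_e, σ⁰_{d-1})`-deviation of `D ∘ α_{K,e}` from its average. -/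
def L2dev (d : ℕ) (K : Set (Esp d)) (e : Esp d) : ℝ :=
  Real.sqrt (∫ u, (Dfun d (sphRadial K e u) - avgD d K e) ^ 2 ∂(sigma0 d e))

/-- `Δ₂(K)`: infimum of the `L²` deviations over `e ∈ -int(K*)`. -/
def Delta2 (d : ℕ) (K : Set (Esp d)) : ℝ :=
  sInf (L2dev d K '' negIntPolar d K)

/-- `Δ₂*(K)`: infimum of the `L²` deviations over all `e` with
`K ⊆ {x : ⟨x,e⟩ ≥ 0}`. -/
def Delta2Star (d : ℕ) (K : Set (Esp d)) : ℝ :=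
  sInf (L2dev d K '' hemiCenters d K)

/-- The centred spherical inradius `r_e(K) = max{r ≥ 0 : B(e,r) ⊆ K}`. -/
def rcent (d : ℕ) (K : Set (Esp d)) (e : Esp d) : ℝ :=
  sSup {r : ℝ | 0 ≤ r ∧ cap e r ⊆ K}

/-- The centred spherical circumradius `R_e(K) = min{r ≥ 0 : K ⊆ B(e,r)}`. -/
def Rcent (d : ℕ) (K : Set (Esp d)) (e : Esp d) : ℝ :=
  sInf {r : ℝ | 0 ≤ r ∧ K ⊆ cap e r}

/-- The spherical inradius `Σ_r(K) = max{r_e(K) : e ∈ K}`. -/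
def SigmaR (d : ℕ) (K : Set (Esp d)) : ℝ :=
  sSup (rcent d K '' K)

/-- The deviation functional `ϑ_r(K) = min{R_e(K) - r_e(K) : e ∈ K, r_e(K) = Σ_r(K)}`. -/
def thetaR (d : ℕ) (K : Set (Esp d)) : ℝ :=
  sInf ((fun e => Rcent d K e - rcent d K e) '' {e ∈ K | rcent d K e = SigmaR d K})

/-- `Ũ_e(K) = σ_d({x ∈ S^d : (x-e)^⊥ ∩ K ≠ ∅})`. -/
def Utilde (d : ℕ) (e : Esp d) (K : Set (Esp d)) : ℝ :=
  (sigmaMeas d {x | ∃ y ∈ K, ⟪x - e, y⟫ = 0}).toReal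

/-- The spherical Hausdorff distance `δ_s`, based on the geodesic metric. -/
def sphHausdorff (d : ℕ) (K L : Set (Esp d)) : ℝ :=
  max (⨆ x ∈ K, ⨅ y ∈ L, geo x y) (⨆ y ∈ L, ⨅ x ∈ K, geo x y)

/-- Continuity of a functional on `𝒦̄_s^d` with respect to the spherical Hausdorff
metric `δ_s`. -/
def SphContinuous (d : ℕ) (F : Set (Esp d) → ℝ) : Prop :=
  ∀ K, IsSphConvBody d K → ∀ ε > (0:ℝ), ∃ δ > (0:ℝ), ∀ L, IsSphConvBody d L →
    sphHausdorff d K L < δ → |F K - F L| < ε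

/-- A hitting functional: continuous, nonnegative, vanishing exactly on one-pointed
sets. -/
def IsHittingFunctional (d : ℕ) (Φ : Set (Esp d) → ℝ) : Prop :=
  SphContinuous d Φ ∧ (∀ K, IsSphConvBody d K → 0 ≤ Φ K) ∧
    (∀ K, IsSphConvBody d K → (Φ K = 0 ↔ ∃ p, K = {p}))

/-- A size functional: continuous, nonnegative, not identically zero, vanishing on
one-pointed sets. -/
def IsSizeFunctional (d : ℕ) (S : Set (Esp d) → ℝ) : Prop :=
  SphContinuous d S ∧ (∀ K, IsSphConvBody d K → 0 ≤ S K) ∧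
    (∃ K, IsSphConvBody d K ∧ S K ≠ 0) ∧
    (∀ p ∈ uSphere d, S ({p} : Set (Esp d)) = 0)

/-- The isoperimetric constant `τ(Φ,Σ,a) = inf{Φ(K) : K ∈ 𝒦̄_s^d, Σ(K) ≥ a}`. -/
def tauConst (d : ℕ) (Φ S : Set (Esp d) → ℝ) (a : ℝ) : ℝ :=
  sInf (Φ '' {K | IsSphConvBody d K ∧ a ≤ S K})

/-- The spherical convex hull of a set `V ⊆ S^d`: the intersection of the sphere with
the closed convex cone generated by `V`. -/
def sphConvHull (d : ℕ) (V : Set (Esp d)) : Set (Esp d) :=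
  {x ∈ uSphere d | ∃ y ∈ convexHull ℝ V, ∃ t : ℝ, 0 < t ∧ x = t • y}

/-- A spherical polytope: the intersection of the sphere with a finitely generated
(polyhedral) cone, which is also a spherically convex body. -/
def IsSphPolytope (d : ℕ) (P : Set (Esp d)) : Prop :=
  IsSphConvBody d P ∧ ∃ V : Finset (Esp d),
    (V : Set (Esp d)) ⊆ uSphere d ∧ P = sphConvHull d (V : Set (Esp d))

/-- The vertices (extreme points) of a spherical polytope. -/
def sphExtremePoints (d : ℕ) (P : Set (Esp d)) : Set (Esp d) :=
  {x ∈ P | x ∉ sphConvHull d (P \ {x})}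

/-- The boundary of `K` relative to the sphere. -/
def sphFrontier (d : ℕ) (K : Set (Esp d)) : Set (Esp d) :=
  {x ∈ K | ∀ ε > (0:ℝ), ∃ y ∈ uSphere d, y ∉ K ∧ dist y x < ε}

/-- The functions `h_m(t) = (-1)^{m+1} e^{-t} + 2 ∑_{i=0}^{⌊m/2⌋} t^{m-2i}/(m-2i)!`. -/
def hFun (m : ℕ) (t : ℝ) : ℝ :=
  (-1 : ℝ) ^ (m + 1) * Real.exp (-t) +
    2 * ∑ i ∈ Finset.range (m / 2 + 1), t ^ (m - 2 * i) / (Nat.factorial (m - 2 * i) : ℝ)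

/-- Covers that almost realise the Hausdorff measure of a set, by subsets of small diameter. -/
lemma exists_cover_tsum_ediam_rpow_le {X : Type*} [MetricSpace X] [MeasurableSpace X]
    [BorelSpace X] {p : ℝ} (hp : 0 < p) {A : Set X} (hA : μH[p] A ≠ ∞) {r ε : ℝ≥0∞}
    (hr : 0 < r) (hε : ε ≠ 0) :
    ∃ t : ℕ → Set X, A ⊆ ⋃ i, t i ∧ (∀ i, t i ⊆ A) ∧ (∀ i, Metric.ediam (t i) ≤ r) ∧
      ∑' i, Metric.ediam (t i) ^ p ≤ μH[p] A + ε := by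
  have hlt : (⨅ (t : ℕ → Set X) (_ : A ⊆ ⋃ n, t n) (_ : ∀ n, Metric.ediam (t n) ≤ r),
      ∑' n, ⨆ _ : (t n).Nonempty, Metric.ediam (t n) ^ p) < μH[p] A + ε := by
    refine lt_of_le_of_lt ?_ (ENNReal.lt_add_right hA hε)
    rw [Measure.hausdorffMeasure_apply]
    exact le_iSup₂_of_le r hr le_rfl
  simp only [iInf_lt_iff] at hlt
  obtain ⟨t, hcov, hdiam, hsum⟩ := hlt
  refine ⟨fun i => t i ∩ A, fun x hx => ?_, fun i => Set.inter_subset_right,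
    fun i => (Metric.ediam_mono Set.inter_subset_left).trans (hdiam i), ?_⟩
  · obtain ⟨i, hi⟩ := Set.mem_iUnion.1 (hcov hx)
    exact Set.mem_iUnion.2 ⟨i, hi, hx⟩
  · refine (ENNReal.tsum_le_tsum fun i => ?_).trans hsum.le
    rcases (t i ∩ A).eq_empty_or_nonempty with h | h
    · simp [h, hp]
    · exact (ENNReal.rpow_le_rpow (Metric.ediam_mono Set.inter_subset_left) hp.le).trans
        (le_iSup (fun _ : (t i).Nonempty => Metric.ediam (t i) ^ p) (h.mono Set.inter_subset_left))

/-- Eilenberg's inequality for a real-valued function which is Lipschitz at small scales. -/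
lemma lintegral_hausdorffMeasure_fiber_le {X : Type*} [MetricSpace X] [MeasurableSpace X]
    [BorelSpace X] {s : ℝ} (hs : 0 < s) {A : Set X} {f : X → ℝ} {C δ : ℝ≥0∞}
    (hA : μH[s + 1] A ≠ ∞) (hC : C ≠ ∞) (hδ : 0 < δ)
    (hf : ∀ x ∈ A, ∀ y ∈ A, edist x y ≤ δ → edist (f x) (f y) ≤ C * edist x y) :
    ∫⁻ t, μH[s] (A ∩ f ⁻¹' {t}) ≤ C * μH[s + 1] A := by
  have hinv (n : ℕ) : ((n : ℝ≥0∞)⁻¹) ≠ 0 := by simp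
  have hr (n : ℕ) : 0 < min δ (n : ℝ≥0∞)⁻¹ := lt_min hδ (pos_iff_ne_zero.2 (hinv n))
  choose E hcov hsub hdiam hsum using fun n : ℕ =>
    exists_cover_tsum_ediam_rpow_le (by linarith : 0 < s + 1) hA (hr n) (hinv n)
  let T (n i : ℕ) : Set ℝ := toMeasurable volume (f '' E n i)
  let g (n : ℕ) (t : ℝ) : ℝ≥0∞ :=
    ∑' i, (T n i).indicator (fun _ => Metric.ediam (E n i) ^ s) t
  have hg (n : ℕ) : Measurable (g n) := Measurable.tsum fun i =>
    measurable_const.indicator (measurableSet_toMeasurable _ _)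
  have hvol (n i : ℕ) : volume (T n i) ≤ C * Metric.ediam (E n i) := by
    rw [measure_toMeasurable]
    refine (Real.volume_le_diam _).trans (Metric.ediam_le ?_)
    rintro _ ⟨x, hx, rfl⟩ _ ⟨y, hy, rfl⟩
    have hxy := Metric.edist_le_ediam_of_mem hx hy
    refine (hf x (hsub n i hx) y (hsub n i hy)
      (hxy.trans ((hdiam n i).trans (min_le_left _ _)))).trans ?_
    gcongr
  have hint (n : ℕ) : ∫⁻ t, g n t ≤ C * (μH[s + 1] A + (n : ℝ≥0∞)⁻¹) := by
    rw [lintegral_tsum fun i =>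
      (measurable_const.indicator (measurableSet_toMeasurable _ _)).aemeasurable]
    refine le_trans ?_ (mul_le_mul_right (hsum n) C)
    rw [← ENNReal.tsum_mul_left]
    refine ENNReal.tsum_le_tsum fun i => ?_
    rw [lintegral_indicator_const (measurableSet_toMeasurable _ _),
      ENNReal.rpow_add_of_nonneg _ _ hs.le zero_le_one, ENNReal.rpow_one]
    calc _ ≤ Metric.ediam (E n i) ^ s * (C * Metric.ediam (E n i)) := by gcongr; exact hvol n i
      _ = _ := by ring
  have hfib (t : ℝ) : μH[s] (A ∩ f ⁻¹' {t}) ≤ liminf (fun n => g n t) atTop := by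
    refine (Measure.hausdorffMeasure_le_liminf_tsum s _ (fun n : ℕ => (n : ℝ≥0∞)⁻¹)
      ENNReal.tendsto_inv_nat_nhds_zero (fun n i => E n i ∩ f ⁻¹' {t})
      (Eventually.of_forall fun n i => ?_) (Eventually.of_forall fun n x hx => ?_)).trans ?_
    · exact (Metric.ediam_mono Set.inter_subset_left).trans ((hdiam n i).trans (min_le_right _ _))
    · obtain ⟨i, hi⟩ := Set.mem_iUnion.1 (hcov n hx.1)
      exact Set.mem_iUnion.2 ⟨i, hi, hx.2⟩
    · refine liminf_le_liminf (Eventually.of_forall fun n => ENNReal.tsum_le_tsum fun i => ?_)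
      rcases (E n i ∩ f ⁻¹' {t}).eq_empty_or_nonempty with h | ⟨x, hx, hxt⟩
      · simp [h, hs]
      · have ht : t ∈ T n i := subset_toMeasurable _ _ ⟨x, hx, hxt⟩
        rw [Set.indicator_of_mem ht]
        exact ENNReal.rpow_le_rpow (Metric.ediam_mono Set.inter_subset_left) hs.le
  calc ∫⁻ t, μH[s] (A ∩ f ⁻¹' {t})
      ≤ ∫⁻ t, liminf (fun n => g n t) atTop := lintegral_mono hfib
    _ ≤ liminf (fun n => ∫⁻ t, g n t) atTop := lintegral_liminf_le hg
    _ ≤ liminf (fun n : ℕ => C * (μH[s + 1] A + (n : ℝ≥0∞)⁻¹)) atTop :=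
        liminf_le_liminf (Eventually.of_forall hint)
    _ = C * μH[s + 1] A := by
        refine Tendsto.liminf_eq (ENNReal.Tendsto.const_mul ?_ (Or.inr hC))
        simpa using tendsto_const_nhds.add ENNReal.tendsto_inv_nat_nhds_zero

/-- The graph of a power on the half-line lies above its tangents. -/
lemma pow_add_mul_sub_le_pow {m u : ℝ} (hm : 0 ≤ m) (hu : 0 ≤ u) (n : ℕ) :
    m ^ n + n * m ^ (n - 1) * (u - m) ≤ u ^ n := by
  rcases n with _ | n
  · simp
  induction n with
  | zero => simp
  | succ k ih =>
    simp only [Nat.add_sub_cancel] at ih ⊢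
    have h1 := mul_le_mul_of_nonneg_left ih hu
    have h2 : 0 ≤ ((k : ℝ) + 1) * m ^ k * (u - m) ^ 2 := by positivity
    push_cast at h1 ⊢
    calc _ = u * (m ^ (k + 1) + (k + 1) * m ^ k * (u - m)) - (k + 1) * m ^ k * (u - m) ^ 2 := by
          ring
      _ ≤ u * u ^ (k + 1) := by linarith
      _ = _ := by ring

/-- The power mean inequality for the integral of a power of the sine. -/
lemma mul_pow_le_integral_sin_pow {n : ℕ} {x : ℝ} (hx : 0 < x) (hxπ : x ≤ π) :
    x * ((1 - cos x) / x) ^ n ≤ ∫ t in (0 : ℝ)..x, sin t ^ n := by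
  set m := (1 - cos x) / x with hm
  have hm0 : 0 ≤ m := div_nonneg (by linarith [cos_le_one x]) hx.le
  have hmx : x * m = 1 - cos x := by rw [hm]; field_simp
  have key : ∀ t ∈ Set.Icc 0 x, m ^ n + n * m ^ (n - 1) * (sin t - m) ≤ sin t ^ n := by
    intro t ht
    have hs : 0 ≤ sin t := sin_nonneg_of_nonneg_of_le_pi ht.1 (ht.2.trans hxπ)
    exact pow_add_mul_sub_le_pow hm0 hs n
  calc x * m ^ n = ∫ t in (0 : ℝ)..x, (m ^ n + n * m ^ (n - 1) * (sin t - m)) := by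
        rw [intervalIntegral.integral_add (by simp) (Continuous.intervalIntegrable (by fun_prop) _ _),
          intervalIntegral.integral_const_mul, intervalIntegral.integral_sub
          (Continuous.intervalIntegrable (by fun_prop) _ _) (by simp)]
        simp [integral_sin, hmx]
    _ ≤ _ := intervalIntegral.integral_mono_on hx.le
        (Continuous.intervalIntegrable (by fun_prop) _ _)
        (Continuous.intervalIntegrable (by fun_prop) _ _) key

/-- A lower bound for the normalised measure of a spherical cap of radius `2 * a`. -/
lemma le_integral_sin_pow {d : ℕ} (hd : 1 ≤ d) {a : ℝ} (ha : 0 < a) (ha' : a ≤ π / 2) :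
    2 * (2 / π) ^ (2 * (d - 1)) * a ^ d ≤ ∫ t in (0 : ℝ)..2 * a, sin t ^ (d - 1) := by
  refine le_trans ?_ (mul_pow_le_integral_sin_pow (by linarith) (by linarith))
  obtain ⟨n, rfl⟩ : ∃ n, d = n + 1 := ⟨d - 1, by omega⟩
  have hsin : 2 / π * a ≤ sin a := mul_le_sin ha.le ha'
  have hpos : 0 ≤ 2 / π * a := by positivity
  have hbase : (2 / π) ^ 2 * a ≤ (1 - cos (2 * a)) / (2 * a) := by
    rw [le_div_iff₀ (by positivity), cos_two_mul, cos_sq']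
    nlinarith
  calc 2 * (2 / π) ^ (2 * (n + 1 - 1)) * a ^ (n + 1) = 2 * a * ((2 / π) ^ 2 * a) ^ n := by
        rw [Nat.add_sub_cancel, pow_mul, mul_pow]; ring
    _ ≤ _ := by
        rw [Nat.add_sub_cancel]
        gcongr

lemma mem_uSphere {d : ℕ} {x : Esp d} : x ∈ uSphere d ↔ ‖x‖ = 1 := by
  simp [uSphere]

lemma geo_eq_angle {d : ℕ} {x y : Esp d} (hx : ‖x‖ = 1) (hy : ‖y‖ = 1) :
    geo x y = InnerProductGeometry.angle x y := by
  simp [geo, InnerProductGeometry.angle, hx, hy]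

lemma measurableSet_uSphere (d : ℕ) : MeasurableSet (uSphere d) :=
  Metric.isClosed_sphere.measurableSet

lemma cap_subset_uSphere {d : ℕ} (e : Esp d) (α : ℝ) : cap e α ⊆ uSphere d := fun _ hx => hx.1

lemma sigmaMeas_cap {d : ℕ} (e : Esp d) (α : ℝ) :
    sigmaMeas d (cap e α) = μH[(d : ℝ)] (cap e α) := by
  rw [sigmaMeas, Measure.restrict_apply' (measurableSet_uSphere d),
    Set.inter_eq_self_of_subset_left (cap_subset_uSphere e α)]

/-- The hyperplane bisecting `e` and `x` meets the cap of radius `a` exactly when `x` lies in the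
cap of radius `2 * a`. -/
lemma exists_mem_cap_inner_sub_eq_zero_iff {d : ℕ} {e x : Esp d} (he : ‖e‖ = 1) (hx : ‖x‖ = 1)
    {a : ℝ} (ha : 0 < a) (ha' : a < π / 2) :
    (∃ y ∈ cap e a, ⟪x - e, y⟫ = 0) ↔ geo x e ≤ 2 * a := by
  constructor
  · rintro ⟨y, ⟨hy, hya⟩, hxy⟩
    rw [mem_uSphere] at hy
    rw [inner_sub_left, sub_eq_zero] at hxy
    have hgeo : geo x y = geo y e := by rw [geo, geo, hxy, real_inner_comm]
    have htri := InnerProductGeometry.angle_le_angle_add_angle x y e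
    rw [← geo_eq_angle hx he, ← geo_eq_angle hx hy, ← geo_eq_angle hy he, hgeo] at htri
    linarith
  · intro h
    set c := ⟪x, e⟫ with hc
    have hcos : cos (2 * a) ≤ c := by
      have hc1 : |c| ≤ 1 := by simpa [hx, he] using abs_real_inner_le_norm x e
      have := cos_le_cos_of_nonneg_of_le_pi (arccos_nonneg c) (by linarith : 2 * a ≤ π) h
      rwa [cos_arccos (abs_le.1 hc1).1 (abs_le.1 hc1).2] at this
    have hca : 0 < cos a := cos_pos_of_mem_Ioo ⟨by linarith, ha'⟩
    rw [cos_two_mul] at hcos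
    have hn : ‖x + e‖ ^ 2 = 2 * (1 + c) := by
      rw [norm_add_sq_real, hx, he]; ring
    have hn0 : 0 < ‖x + e‖ := by
      refine lt_of_le_of_ne (norm_nonneg _) fun h0 => ?_
      rw [← h0] at hn
      nlinarith
    refine ⟨‖x + e‖⁻¹ • (x + e), ⟨?_, ?_⟩, ?_⟩
    · rw [mem_uSphere, norm_smul, norm_inv, norm_norm, inv_mul_cancel₀ hn0.ne']
    · have hin : ⟪‖x + e‖⁻¹ • (x + e), e⟫ = ‖x + e‖ / 2 := by
        rw [real_inner_smul_left, inner_add_left, real_inner_self_eq_norm_sq, he, ← hc]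
        field_simp
        linarith
      rw [geo, hin, ← arccos_cos ha.le (by linarith : a ≤ π)]
      refine arccos_le_arccos ?_
      nlinarith
    · rw [real_inner_smul_right, inner_sub_left, inner_add_right, inner_add_right,
        real_inner_self_eq_norm_sq, real_inner_self_eq_norm_sq, hx, he, real_inner_comm]
      ring

lemma Utilde_cap {d : ℕ} {e : Esp d} (he : ‖e‖ = 1) {a : ℝ} (ha : 0 < a) (ha' : a < π / 2) :
    Utilde d e (cap e a) = (sigmaMeas d (cap e (2 * a))).toReal := by
  rw [Utilde, sigmaMeas, Measure.restrict_apply' (measurableSet_uSphere d),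
    Measure.restrict_apply' (measurableSet_uSphere d)]
  congr 2
  ext x
  simp only [Set.mem_inter_iff, cap, Set.mem_ofPred_eq]
  constructor
  · rintro ⟨h, hx⟩
    exact ⟨⟨hx, (exists_mem_cap_inner_sub_eq_zero_iff he (mem_uSphere.1 hx) ha ha').1 h⟩, hx⟩
  · rintro ⟨⟨-, h⟩, hx⟩
    exact ⟨(exists_mem_cap_inner_sub_eq_zero_iff he (mem_uSphere.1 hx) ha ha').2 h, hx⟩

/-- Inverse stereographic projection from `-e`, up to the identification of `eᗮ` with a tangent
hyperplane. -/
def stereoMap {d : ℕ} (e : Esp d) (v : (ℝ ∙ e)ᗮ) : Esp d :=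
  (2 : ℝ) • ((1 / ‖e + (v : Esp d)‖) ^ 2 • (e + (v : Esp d))) - e

lemma inner_coe_orthogonal {d : ℕ} (e : Esp d) (v : (ℝ ∙ e)ᗮ) : ⟪e, (v : Esp d)⟫ = 0 :=
  Submodule.mem_orthogonal_singleton_iff_inner_right.1 v.2

lemma one_le_norm_add_coe_orthogonal {d : ℕ} {e : Esp d} (he : ‖e‖ = 1) (v : (ℝ ∙ e)ᗮ) :
    1 ≤ ‖e + (v : Esp d)‖ := by
  have := norm_add_sq_real e (v : Esp d)
  rw [inner_coe_orthogonal, he] at this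
  nlinarith [norm_nonneg (e + (v : Esp d)), sq_nonneg ‖(v : Esp d)‖]

lemma lipschitzWith_stereoMap {d : ℕ} {e : Esp d} (he : ‖e‖ = 1) :
    LipschitzWith 2 (stereoMap e) := by
  refine LipschitzWith.of_dist_le_mul fun v w => ?_
  have hv := one_le_norm_add_coe_orthogonal he v
  have hw := one_le_norm_add_coe_orthogonal he w
  rw [stereoMap, stereoMap, dist_sub_right, dist_smul₀,
    dist_div_norm_sq_smul (norm_pos_iff.1 (by linarith)) (norm_pos_iff.1 (by linarith)),
    dist_add_left, ← Subtype.dist_eq]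
  have : (1 : ℝ) ^ 2 / (‖e + (v : Esp d)‖ * ‖e + (w : Esp d)‖) ≤ 1 := by
    rw [one_pow]
    exact div_le_one_of_le₀ (by nlinarith) (by positivity)
  simp only [Real.norm_ofNat, NNReal.coe_ofNat]
  nlinarith [dist_nonneg (x := v) (y := w)]

/-- A closed hemisphere is the image of a ball under inverse stereographic projection. -/
lemma hemisphere_subset_image_stereoMap {d : ℕ} {e : Esp d} (he : ‖e‖ = 1) :
    {x ∈ uSphere d | 0 ≤ ⟪x, e⟫} ⊆ stereoMap e '' Metric.closedBall 0 1 := by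
  rintro x ⟨hx, hxe⟩
  rw [mem_uSphere] at hx
  set c := ⟪x, e⟫ with hc
  have hn : ‖x + e‖ ^ 2 = 2 * (1 + c) := by
    rw [norm_add_sq_real, hx, he]; ring
  have hv : (1 + c)⁻¹ • (x + e) - e ∈ (ℝ ∙ e)ᗮ := by
    rw [Submodule.mem_orthogonal_singleton_iff_inner_left, inner_sub_left, real_inner_smul_left,
      inner_add_left, real_inner_self_eq_norm_sq, he, ← hc]
    field_simp
    ring
  have hz : ‖(1 + c)⁻¹ • (x + e)‖ ^ 2 = 2 / (1 + c) := by
    rw [norm_smul, mul_pow, hn, Real.norm_of_nonneg (by positivity)]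
    field_simp
  refine ⟨⟨_, hv⟩, ?_, ?_⟩
  · rw [mem_closedBall_zero_iff, Submodule.coe_norm, ← sq_le_one_iff₀ (norm_nonneg _),
      norm_sub_sq_real, hz, real_inner_smul_left, inner_add_left, real_inner_self_eq_norm_sq, he,
      ← hc]
    have h2 : 2 / (1 + c) ≤ 2 := div_le_self zero_le_two (by linarith)
    have h3 : (1 + c)⁻¹ * (c + 1 ^ 2) = 1 := by field_simp; ring
    rw [h3]
    linarith
  · simp only [stereoMap, add_sub_cancel]
    rw [div_pow, hz, smul_smul, smul_smul, show 2 * (1 ^ 2 / (2 / (1 + c))) * (1 + c)⁻¹ = 1 by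
      field_simp, one_smul, add_sub_cancel_right]

lemma hausdorffMeasure_hemisphere_lt_top {d : ℕ} {e : Esp d} (he : ‖e‖ = 1) :
    μH[(d : ℝ)] {x ∈ uSphere d | 0 ≤ ⟪x, e⟫} < ∞ := by
  have he0 : e ≠ 0 := norm_pos_iff.1 (by linarith)
  have : Fact (Module.finrank ℝ (Esp d) = d + 1) := ⟨by simp⟩
  have hfin : Module.finrank ℝ (ℝ ∙ e)ᗮ = d := Submodule.finrank_orthogonal_span_singleton he0
  have hball : μH[(d : ℝ)] (Metric.closedBall (0 : (ℝ ∙ e)ᗮ) 1) < ∞ := by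
    have := (isCompact_closedBall (0 : (ℝ ∙ e)ᗮ) 1).measure_lt_top
      (μ := μH[(Module.finrank ℝ (ℝ ∙ e)ᗮ : ℝ)])
    rwa [hfin] at this
  calc _ ≤ _ := measure_mono (hemisphere_subset_image_stereoMap he)
    _ ≤ _ := (lipschitzWith_stereoMap he).hausdorffMeasure_image_le d.cast_nonneg _
    _ < ∞ := ENNReal.mul_lt_top (by finiteness) hball

lemma hausdorffMeasure_uSphere_lt_top {d : ℕ} {e : Esp d} (he : ‖e‖ = 1) :
    μH[(d : ℝ)] (uSphere d) < ∞ := by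
  refine lt_of_le_of_lt (measure_mono (t := {x ∈ uSphere d | 0 ≤ ⟪x, e⟫} ∪
    {x ∈ uSphere d | 0 ≤ ⟪x, -e⟫}) fun x hx => ?_) (measure_union_lt_top
    (hausdorffMeasure_hemisphere_lt_top he)
    (hausdorffMeasure_hemisphere_lt_top (by rwa [norm_neg])))
  rcases le_total 0 ⟪x, e⟫ with h | h
  · exact Or.inl ⟨hx, h⟩
  · exact Or.inr ⟨hx, by rw [inner_neg_right]; linarith⟩

/-- The map contracting the hemisphere centred at `e` by scaling its orthogonal projection to
`eᗮ` with the factor `ρ`. -/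
def hemisphereContraction {d : ℕ} (e : Esp d) (ρ : ℝ) (x : Esp d) : Esp d :=
  ρ • x + (√(1 - ρ ^ 2 + ρ ^ 2 * ⟪x, e⟫ ^ 2) - ρ * ⟪x, e⟫) • e

lemma lipschitzWith_hemisphereContraction {d : ℕ} {e : Esp d} (he : ‖e‖ = 1) {ρ : ℝ} (hρ : 0 ≤ ρ)
    (hρ1 : ρ ≤ 1) : LipschitzWith ρ.toNNReal (hemisphereContraction e ρ) := by
  refine LipschitzWith.of_dist_le_mul fun x y => ?_
  set s := ⟪x, e⟫ with hs
  set t := ⟪y, e⟫ with ht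
  set k := √(1 - ρ ^ 2 + ρ ^ 2 * s ^ 2) with hk
  set l := √(1 - ρ ^ 2 + ρ ^ 2 * t ^ 2) with hl
  have hρ2 : 0 ≤ 1 - ρ ^ 2 := by nlinarith
  have hk2 : k ^ 2 = 1 - ρ ^ 2 + ρ ^ 2 * s ^ 2 := sq_sqrt (by positivity)
  have hl2 : l ^ 2 = 1 - ρ ^ 2 + ρ ^ 2 * t ^ 2 := sq_sqrt (by positivity)
  have hkl : 1 - ρ ^ 2 + ρ ^ 2 * s * t ≤ k * l := by
    refine le_of_sq_le_sq ?_ (by positivity)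
    rw [mul_pow, hk2, hl2]
    nlinarith [mul_nonneg hρ2 (sq_nonneg (ρ * (s - t)))]
  have hdiff : hemisphereContraction e ρ x - hemisphereContraction e ρ y =
      ρ • (x - y) + (k - l - ρ * (s - t)) • e := by
    simp only [hemisphereContraction, ← hs, ← ht, ← hk, ← hl]
    module
  rw [dist_eq_norm, dist_eq_norm, hdiff, Real.coe_toNNReal ρ hρ]
  refine le_of_sq_le_sq ?_ (by positivity)
  rw [norm_add_sq_real, norm_smul, norm_smul, real_inner_smul_left, real_inner_smul_right,
    inner_sub_left, he, ← hs, ← ht, mul_pow, mul_pow, mul_pow, Real.norm_eq_abs, Real.norm_eq_abs,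
    sq_abs, sq_abs]
  nlinarith

lemma cap_subset_image_hemisphereContraction {d : ℕ} {e : Esp d} (he : ‖e‖ = 1) {ρ : ℝ}
    (hρ : 0 < ρ) (hρ1 : ρ ≤ 1) :
    cap e ρ ⊆ hemisphereContraction e ρ '' uSphere d := by
  rintro z ⟨hz, hzρ⟩
  rw [mem_uSphere] at hz
  set u := ⟪z, e⟫ with hu
  have hu1 : |u| ≤ 1 := by simpa [hz, he] using abs_real_inner_le_norm z e
  have hcos : cos ρ ≤ u := by
    have := cos_le_cos_of_nonneg_of_le_pi (arccos_nonneg u) (by linarith [pi_gt_three] : ρ ≤ π) hzρ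
    rwa [cos_arccos (abs_le.1 hu1).1 (abs_le.1 hu1).2] at this
  have hcos0 : 0 < cos ρ := cos_pos_of_le_one (by rwa [abs_of_pos hρ])
  have hsin : sin ρ ^ 2 ≤ ρ ^ 2 := sq_le_sq' (by
    linarith [sin_nonneg_of_nonneg_of_le_pi hρ.le (by linarith [pi_gt_three])]) (sin_le hρ.le)
  have huρ : 1 - u ^ 2 ≤ ρ ^ 2 := by nlinarith [sin_sq_add_cos_sq ρ]
  set s := √(1 - (1 - u ^ 2) / ρ ^ 2) with hs
  have hs2 : s ^ 2 = 1 - (1 - u ^ 2) / ρ ^ 2 :=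
    sq_sqrt (sub_nonneg.2 (div_le_one_of_le₀ huρ (by positivity)))
  have hin : ⟪ρ⁻¹ • (z - u • e) + s • e, e⟫ = s := by
    rw [inner_add_left, real_inner_smul_left, inner_sub_left, real_inner_smul_left,
      real_inner_smul_left, real_inner_self_eq_norm_sq, he, ← hu]
    ring
  refine ⟨ρ⁻¹ • (z - u • e) + s • e, ?_, ?_⟩
  · rw [mem_uSphere, ← sq_eq_sq₀ (norm_nonneg _) zero_le_one, norm_add_sq_real, norm_smul,
      norm_smul, real_inner_smul_left, real_inner_smul_right, inner_sub_left, real_inner_smul_left,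
      real_inner_self_eq_norm_sq, he, ← hu, mul_pow, norm_sub_sq_real, real_inner_smul_right, ← hu,
      norm_smul, he, hz, mul_pow, mul_pow, norm_inv, inv_pow, Real.norm_eq_abs, Real.norm_eq_abs,
      Real.norm_eq_abs, sq_abs, sq_abs, sq_abs, hs2]
    field_simp
    ring
  · have hroot : √(1 - ρ ^ 2 + ρ ^ 2 * s ^ 2) = u := by
      rw [hs2, show 1 - ρ ^ 2 + ρ ^ 2 * (1 - (1 - u ^ 2) / ρ ^ 2) = u ^ 2 by field_simp; ring,
        sqrt_sq (hcos0.le.trans hcos)]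
    rw [hemisphereContraction, hin, hroot, smul_add, smul_smul, mul_inv_cancel₀ hρ.ne']
    module

lemma sigmaMeas_uSphere (d : ℕ) : sigmaMeas d (uSphere d) = μH[(d : ℝ)] (uSphere d) := by
  rw [sigmaMeas, Measure.restrict_apply_self]

lemma sigmaMeas_cap_ne_top {d : ℕ} {e : Esp d} (he : ‖e‖ = 1) (α : ℝ) :
    sigmaMeas d (cap e α) ≠ ∞ := by
  rw [sigmaMeas_cap]
  exact ((measure_mono (cap_subset_uSphere e α)).trans_lt (hausdorffMeasure_uSphere_lt_top he)).ne

lemma sigmaMeas_cap_le {d : ℕ} {e : Esp d} (he : ‖e‖ = 1) {ρ : ℝ} (hρ : 0 < ρ) :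
    (sigmaMeas d (cap e ρ)).toReal ≤ ρ ^ d * omegaTot d := by
  have hfin := hausdorffMeasure_uSphere_lt_top he
  rw [omegaTot, sigmaMeas_uSphere, sigmaMeas_cap]
  rcases le_total ρ 1 with h1 | h1
  · have hle : μH[(d : ℝ)] (cap e ρ) ≤ ENNReal.ofReal (ρ ^ d) * μH[(d : ℝ)] (uSphere d) :=
      calc _ ≤ _ := measure_mono (cap_subset_image_hemisphereContraction he hρ h1)
        _ ≤ _ := (lipschitzWith_hemisphereContraction he hρ.le h1).hausdorffMeasure_image_le
            d.cast_nonneg _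
        _ = _ := by
          rw [ENNReal.rpow_natCast, ENNReal.ofReal_pow hρ.le, ENNReal.ofReal]
    refine (ENNReal.toReal_mono (by finiteness) hle).trans_eq ?_
    rw [ENNReal.toReal_mul, ENNReal.toReal_ofReal (by positivity)]
  · refine (ENNReal.toReal_mono hfin.ne (measure_mono (cap_subset_uSphere e ρ))).trans ?_
    exact le_mul_of_one_le_left ENNReal.toReal_nonneg (one_le_pow₀ h1)

open scoped Pointwise in
/-- The points at angular distance `t` from `e` contain an isometric copy of a sphere of
dimension `d - 1` and radius `sin t`. -/
lemma le_hausdorffMeasure_geo_fiber {d : ℕ} {s : ℝ} (hs : 0 ≤ s) {e : Esp d} (he : ‖e‖ = 1)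
    {t r : ℝ} (ht : 0 < t) (htr : t ≤ r) (htπ : t < π) :
    ENNReal.ofReal (sin t) ^ s * μH[s] (Metric.sphere (0 : EuclideanSpace ℝ (Fin d)) 1) ≤
      μH[s] (cap e r ∩ (fun x => geo x e) ⁻¹' {t}) := by
  have he0 : e ≠ 0 := norm_pos_iff.1 (by linarith)
  have hsin : 0 < sin t := sin_pos_of_pos_of_lt_pi ht htπ
  have : Fact (Module.finrank ℝ (Esp d) = d + 1) := ⟨by simp⟩
  let ι := (OrthonormalBasis.fromOrthogonalSpanSingleton (𝕜 := ℝ) d he0).repr.symm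
  let φ (u : EuclideanSpace ℝ (Fin d)) : Esp d := cos t • e + (ι u : Esp d)
  have hφ : Isometry φ := (IsometryEquiv.addLeft (cos t • e)).isometry.comp
    (isometry_subtype_coe.comp ι.isometry)
  have himage : φ '' (sin t • Metric.sphere (0 : EuclideanSpace ℝ (Fin d)) 1) ⊆
      cap e r ∩ (fun x => geo x e) ⁻¹' {t} := by
    rintro _ ⟨_, ⟨u, hu, rfl⟩, rfl⟩
    rw [mem_sphere_zero_iff_norm] at hu
    have hnorm : ‖(ι (sin t • u) : Esp d)‖ = sin t := by
      rw [← Submodule.coe_norm, ι.norm_map, norm_smul, hu, mul_one, Real.norm_of_nonneg hsin.le]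
    have horth := inner_coe_orthogonal e (ι (sin t • u))
    have hgeo : geo (φ (sin t • u)) e = t := by
      rw [geo, inner_add_left, real_inner_smul_left, real_inner_self_eq_norm_sq, he,
        real_inner_comm, horth]
      simp [arccos_cos ht.le htπ.le]
    refine ⟨⟨?_, hgeo.trans_le htr⟩, hgeo⟩
    rw [mem_uSphere, ← sq_eq_sq₀ (norm_nonneg _) zero_le_one, norm_add_sq_real,
      real_inner_smul_left, horth, norm_smul, hnorm, he, mul_one, Real.norm_eq_abs, sq_abs]
    linarith [sin_sq_add_cos_sq t]
  refine le_trans (le_of_eq ?_) (measure_mono himage)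
  rw [hφ.hausdorffMeasure_image (Or.inl hs), Measure.hausdorffMeasure_smul₀ hs hsin.ne',
    ENNReal.smul_def, smul_eq_mul, ENNReal.coe_rpow_of_nonneg _ hs, ← enorm_eq_nnnorm,
    Real.enorm_of_nonneg hsin.le]

/-- On the unit sphere the angle exceeds the chordal distance only to third order. -/
lemma mul_angle_le_dist {d : ℕ} {x y : Esp d} (hx : ‖x‖ = 1) (hy : ‖y‖ = 1) {δ : ℝ}
    (hδ : dist x y ≤ δ) :
    (1 - δ ^ 2 / 6) * InnerProductGeometry.angle x y ≤ dist x y := by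
  set θ := InnerProductGeometry.angle x y with hθ
  have hθ0 : 0 ≤ θ := InnerProductGeometry.angle_nonneg x y
  have hθπ : θ ≤ π := InnerProductGeometry.angle_le_pi x y
  have hdist : dist x y = 2 * sin (θ / 2) := by
    rw [← sq_eq_sq₀ dist_nonneg (mul_nonneg zero_le_two
      (sin_nonneg_of_nonneg_of_le_pi (by linarith) (by linarith))), dist_eq_norm,
      norm_sub_sq_real, ← InnerProductGeometry.cos_angle_mul_norm_mul_norm, hx, hy, ← hθ, mul_pow,
      sin_sq, cos_sq]
    ring_nf
  rcases hθ0.eq_or_lt with h0 | h0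
  · rw [← h0]; simp
  have hcube := sin_gt_sub_cube (half_pos h0)
  have hjordan : 2 / π * (θ / 2) ≤ sin (θ / 2) := mul_le_sin (by linarith) (by linarith)
  have hθδ : θ ≤ 2 * δ := by
    have : θ / 4 ≤ 2 / π * (θ / 2) := by
      rw [div_mul_div_comm, div_le_div_iff₀ (by norm_num) (by positivity)]
      nlinarith [pi_le_four]
    linarith
  rw [hdist]
  nlinarith [mul_nonneg hθ0 (by nlinarith : 0 ≤ 4 * δ ^ 2 - θ ^ 2)]

lemma edist_geo_le {d : ℕ} {e x y : Esp d} (he : ‖e‖ = 1) (hx : ‖x‖ = 1) (hy : ‖y‖ = 1) {δ : ℝ}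
    (hδ : 0 < δ) (hδ1 : δ < 1) (hxy : edist x y ≤ ENNReal.ofReal δ) :
    edist (geo x e) (geo y e) ≤ ENNReal.ofReal (1 - δ ^ 2 / 6)⁻¹ * edist x y := by
  have hpos : 0 < 1 - δ ^ 2 / 6 := by nlinarith
  rw [edist_dist, ENNReal.ofReal_le_ofReal_iff hδ.le] at hxy
  rw [edist_dist, edist_dist, ← ENNReal.ofReal_mul (by positivity)]
  refine ENNReal.ofReal_le_ofReal ?_
  have hangle := mul_angle_le_dist hx hy hxy
  rw [geo_eq_angle hx he, geo_eq_angle hy he, ← div_eq_inv_mul, le_div_iff₀' hpos]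
  refine le_trans ?_ hangle
  gcongr
  rw [Real.dist_eq, abs_sub_le_iff]
  have h1 := InnerProductGeometry.angle_le_angle_add_angle x y e
  have h2 := InnerProductGeometry.angle_le_angle_add_angle y x e
  rw [InnerProductGeometry.angle_comm y x] at h2
  constructor <;> linarith

lemma ofReal_integral_sin_pow_mul_le {d : ℕ} (hd : 2 ≤ d) {e : Esp d} (he : ‖e‖ = 1) {r δ : ℝ}
    (hr : 0 < r) (hrπ : r ≤ π) (hδ : 0 < δ) (hδ1 : δ < 1) :
    ENNReal.ofReal (∫ t in (0 : ℝ)..r, sin t ^ (d - 1)) *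
        μH[(d : ℝ) - 1] (Metric.sphere (0 : EuclideanSpace ℝ (Fin d)) 1) ≤
      ENNReal.ofReal (1 - δ ^ 2 / 6)⁻¹ * μH[(d : ℝ)] (cap e r) := by
  set W := μH[(d : ℝ) - 1] (Metric.sphere (0 : EuclideanSpace ℝ (Fin d)) 1)
  have hd' : (2 : ℝ) ≤ d := by exact_mod_cast hd
  have hs : 0 < (d : ℝ) - 1 := by linarith
  have hfin : μH[(d : ℝ) - 1 + 1] (cap e r) ≠ ∞ := by
    rw [sub_add_cancel, ← sigmaMeas_cap]
    exact sigmaMeas_cap_ne_top he r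
  have heil := lintegral_hausdorffMeasure_fiber_le hs hfin ENNReal.ofReal_ne_top
    (ENNReal.ofReal_pos.2 hδ) (f := fun x => geo x e) fun x hx y hy hxy =>
      edist_geo_le he (mem_uSphere.1 hx.1) (mem_uSphere.1 hy.1) hδ hδ1 hxy
  rw [sub_add_cancel] at heil
  refine le_trans ?_ heil
  have hnonneg : ∀ t ∈ Set.Ioo 0 r, 0 ≤ sin t := fun t ht =>
    sin_nonneg_of_nonneg_of_le_pi ht.1.le (ht.2.le.trans hrπ)
  calc ENNReal.ofReal (∫ t in (0 : ℝ)..r, sin t ^ (d - 1)) * W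
      = ∫⁻ t in Set.Ioo 0 r, ENNReal.ofReal (sin t ^ (d - 1)) * W := by
        rw [lintegral_mul_const _ (by fun_prop), intervalIntegral.integral_of_le hr.le,
          integral_Ioc_eq_integral_Ioo, ofReal_integral_eq_lintegral_ofReal]
        · exact ((by fun_prop : Continuous fun t => sin t ^ (d - 1)).integrableOn_Icc).mono_set
            Set.Ioo_subset_Icc_self
        · exact (ae_restrict_iff' measurableSet_Ioo).2
            (Eventually.of_forall fun t ht => pow_nonneg (hnonneg t ht) _)
    _ ≤ ∫⁻ t in Set.Ioo 0 r, μH[(d : ℝ) - 1] (cap e r ∩ (fun x => geo x e) ⁻¹' {t}) := by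
        refine setLIntegral_mono' measurableSet_Ioo fun t ht => ?_
        refine le_trans (le_of_eq ?_)
          (le_hausdorffMeasure_geo_fiber hs.le he ht.1 ht.2.le (ht.2.trans_le hrπ))
        rw [ENNReal.ofReal_pow (hnonneg t ht), ← ENNReal.rpow_natCast,
          Nat.cast_sub (by omega : 1 ≤ d), Nat.cast_one]
    _ ≤ _ := setLIntegral_le_lintegral _ _

lemma integral_sin_pow_mul_omegaSm_le {d : ℕ} (hd : 2 ≤ d) {e : Esp d} (he : ‖e‖ = 1) {r : ℝ}
    (hr : 0 < r) (hrπ : r ≤ π) :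
    (∫ t in (0 : ℝ)..r, sin t ^ (d - 1)) * omegaSm d ≤ (sigmaMeas d (cap e r)).toReal := by
  have hfin := sigmaMeas_cap_ne_top he r
  have hint : 0 ≤ ∫ t in (0 : ℝ)..r, sin t ^ (d - 1) :=
    intervalIntegral.integral_nonneg hr.le fun t ht =>
      pow_nonneg (sin_nonneg_of_nonneg_of_le_pi ht.1 (ht.2.trans hrπ)) _
  have hbound : ∀ δ ∈ Set.Ioo (0 : ℝ) 1, (1 - δ ^ 2 / 6) *
      ((∫ t in (0 : ℝ)..r, sin t ^ (d - 1)) * omegaSm d) ≤ (sigmaMeas d (cap e r)).toReal := by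
    intro δ hδ
    have hpos : 0 < 1 - δ ^ 2 / 6 := by nlinarith [hδ.1, hδ.2]
    have h := ofReal_integral_sin_pow_mul_le hd he hr hrπ hδ.1 hδ.2
    rw [← sigmaMeas_cap] at h
    have h' := ENNReal.toReal_mono (by finiteness) h
    rw [ENNReal.toReal_mul, ENNReal.toReal_mul, ENNReal.toReal_ofReal hint,
      ENNReal.toReal_ofReal (by positivity), ← div_eq_inv_mul, le_div_iff₀' hpos] at h'
    exact h'
  refine le_of_tendsto (x := 𝓝[>] (0 : ℝ)) (f := fun δ : ℝ => (1 - δ ^ 2 / 6) *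
      ((∫ t in (0 : ℝ)..r, sin t ^ (d - 1)) * omegaSm d)) ?_
    (eventually_of_mem (Ioo_mem_nhdsGT one_pos) hbound)
  refine tendsto_nhdsWithin_of_tendsto_nhds ?_
  have hcont : Continuous fun δ : ℝ => (1 - δ ^ 2 / 6) *
      ((∫ t in (0 : ℝ)..r, sin t ^ (d - 1)) * omegaSm d) := by fun_prop
  simpa using hcont.tendsto 0

/-- formula (5.1). For `e ∈ S^d` and `a ∈ (0,π/2)`:
`Ũ_e(B(e,a)) = σ_d(B(e,2a))` and
`2 ω_d (2/π)^{2(d-1)} a^d ≤ σ_d(B(e,2a)) ≤ 2^d ω_{d+1} a^d`. -/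
theorem statement10 (d : ℕ) (hd : 2 ≤ d) (e : Esp d) (he : e ∈ uSphere d)
    (a : ℝ) (ha : 0 < a) (ha' : a < π / 2) :
    Utilde d e (cap e a) = (sigmaMeas d (cap e (2 * a))).toReal ∧
    2 * omegaSm d * (2 / π) ^ (2 * (d - 1)) * a ^ d ≤ (sigmaMeas d (cap e (2 * a))).toReal ∧
    (sigmaMeas d (cap e (2 * a))).toReal ≤ 2 ^ d * omegaTot d * a ^ d := by
  rw [mem_uSphere] at he
  refine ⟨Utilde_cap he ha ha', ?_, ?_⟩
  · refine le_trans ?_ (integral_sin_pow_mul_omegaSm_le hd he (by linarith : 0 < 2 * a)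
      (by linarith))
    calc 2 * omegaSm d * (2 / π) ^ (2 * (d - 1)) * a ^ d
        = 2 * (2 / π) ^ (2 * (d - 1)) * a ^ d * omegaSm d := by ring
      _ ≤ _ := mul_le_mul_of_nonneg_right (le_integral_sin_pow (by omega) ha ha'.le)
          ENNReal.toReal_nonneg
  · refine (sigmaMeas_cap_le he (by linarith : 0 < 2 * a)).trans_eq ?_
    rw [mul_pow]
    ring

end
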